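/- Let n be a positive integer, let R = ℤ[X]/(X^n), and let c = 1/(n!·(n−1)!). Then Σ_{k ≤ B} a_R(k) is asymptotically equivalent to c·B·(log B)^{n−1} as B → ∞. -/

import Mathlib

/-- `idealCount R k` is the number of ideals `I` of `R` such that `R ⧸ I` is finite
with exactly `k` elements. -/
noncomputable def idealCount (R : Type) [CommRing R] (k : ℕ) : ℕ :=
  Set.ncard {I : Ideal R | Nat.card (R ⧸ I) = k}

/-!
An ideal `I` of finite index in `ℤ[X]` is determined by the colon ideal `J = (I : X)`, the positive
generator `d` of its ideal of constant coefficients, and a lift of `d` to an element of `I`. The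
index of `I` is `d` times that of `J`, the possible `d` are the multiples of the generator `d'` for
`J`, and each of them admits exactly `d'` lifts. Hence `a_R` is the Dirichlet convolution of the
coefficients of `ζ((j + 1)s - j)` for `j < n`.

Convolving with the coefficients of `ζ((p + 1)s - p)` replaces `S(z ^ (p + 1)) / z ^ (p + 1)`, where
`S` is the summatory function, by its harmonic sum. As `∑_{e ≤ y} log(y / e) ^ m / e` is asymptotic
to `(log y) ^ (m + 1) / (m + 1)`, each convolution turns `a x (log x) ^ m` into
`a x (log x) ^ (m + 1) / ((p + 1)(m + 1))`, and `m = p - 1` at the `p`-th step yields the constant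
`1 / (n! (n - 1)!)`.
-/

section ColonIdeal

open Polynomial

variable {R : Type*} [CommRing R]

theorem mem_colon_X {I : Ideal R[X]} {f : R[X]} : f ∈ I.colon {X} ↔ X * f ∈ I := by
  rw [Submodule.mem_colon_singleton, smul_eq_mul, mul_comm]

theorem mem_map_constantCoeff {I : Ideal R[X]} {r : R} :
    r ∈ I.map constantCoeff ↔ ∃ f ∈ I, f.coeff 0 = r :=
  Ideal.mem_map_iff_of_surjective _ constantCoeff_surjective

theorem cardQuot_eq_cardQuot_map_mul_cardQuot_colon_X (I : Ideal R[X]) :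
    I.cardQuot = (I.map constantCoeff).cardQuot * (I.colon {X}).cardQuot := by
  have hX : (AddMonoidHom.mulLeft (X : R[X])).range = (Ideal.span {(X : R[X])}).toAddSubgroup := by
    ext f
    simp [Ideal.mem_span_singleton, dvd_def, eq_comm]
  have hcolon : (I.colon {X}).toAddSubgroup =
      I.toAddSubgroup.comap (AddMonoidHom.mulLeft (X : R[X])) := by
    ext f
    exact mem_colon_X
  have hmap : I.toAddSubgroup ⊔ (Ideal.span {(X : R[X])}).toAddSubgroup =
      (I.map constantCoeff).toAddSubgroup.comap (constantCoeff (R := R)).toAddMonoidHom := by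
    rw [← Submodule.sup_toAddSubgroup, ← ker_constantCoeff,
      ← Ideal.comap_map_of_surjective' (constantCoeff (R := R)) constantCoeff_surjective]
    rfl
  calc I.cardQuot
      = I.toAddSubgroup.relIndex (I.toAddSubgroup ⊔ (Ideal.span {(X : R[X])}).toAddSubgroup) *
          (I.toAddSubgroup ⊔ (Ideal.span {(X : R[X])}).toAddSubgroup).index :=
        (AddSubgroup.relIndex_mul_index le_sup_left).symm
    _ = (I.colon {X}).cardQuot * (I.map constantCoeff).cardQuot := by
        rw [AddSubgroup.relIndex_sup_left, hmap, AddSubgroup.index_comap_of_surjective _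
          constantCoeff_surjective, ← hX, ← AddSubgroup.index_comap, ← hcolon]
        rfl
    _ = _ := mul_comm _ _

/-- The ideal `X J + (g)`. -/
noncomputable def xMulSupSpan (J : Ideal R[X]) (g : R[X]) : Ideal R[X] :=
  Ideal.span {X} * J ⊔ Ideal.span {g}

theorem mem_xMulSupSpan {J : Ideal R[X]} {g f : R[X]} (hg : g ∈ J) :
    f ∈ xMulSupSpan J g ↔ ∃ r : R, ∃ j ∈ J, f = C r * g + X * j := by
  rw [xMulSupSpan, Submodule.mem_sup]
  constructor
  · rintro ⟨_, hxj, _, hqg, rfl⟩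
    obtain ⟨j, hj, rfl⟩ := Ideal.mem_span_singleton_mul.1 hxj
    obtain ⟨q, rfl⟩ := Ideal.mem_span_singleton.1 hqg
    refine ⟨q.coeff 0, j + q.divX * g, J.add_mem hj (J.mul_mem_left _ hg), ?_⟩
    linear_combination -g * divX_mul_X_add q
  · rintro ⟨r, j, hj, rfl⟩
    exact ⟨X * j, Ideal.mem_span_singleton_mul.2 ⟨j, hj, rfl⟩, C r * g,
      Ideal.mul_mem_left _ _ (Ideal.mem_span_singleton_self g), add_comm _ _⟩

theorem self_mem_xMulSupSpan (J : Ideal R[X]) (g : R[X]) : g ∈ xMulSupSpan J g :=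
  Ideal.mem_sup_right (Ideal.mem_span_singleton_self g)

theorem map_constantCoeff_xMulSupSpan (J : Ideal R[X]) (g : R[X]) :
    (xMulSupSpan J g).map constantCoeff = Ideal.span {g.coeff 0} := by
  simp [xMulSupSpan, Ideal.map_sup, Ideal.map_mul, Ideal.map_span]

theorem X_mul_mem_xMulSupSpan {J : Ideal R[X]} {g f : R[X]} (hg : g ∈ J)
    (hg₀ : g.coeff 0 ∈ nonZeroDivisors R) : X * f ∈ xMulSupSpan J g ↔ f ∈ J := by
  constructor
  · intro hf
    obtain ⟨r, j, hj, h⟩ := (mem_xMulSupSpan hg).1 hf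
    have hr : r * g.coeff 0 = 0 := by simpa using (congrArg (coeff · 0) h).symm
    obtain rfl : r = 0 := (mul_right_mem_nonZeroDivisors_eq_zero_iff hg₀).1 hr
    obtain rfl : f = j := isRegular_X.left (by simpa using h)
    exact hj
  · exact fun hf => Ideal.mem_sup_left (Ideal.mul_mem_mul (Ideal.mem_span_singleton_self X) hf)

theorem colon_X_xMulSupSpan {J : Ideal R[X]} {g : R[X]} (hg : g ∈ J)
    (hg₀ : g.coeff 0 ∈ nonZeroDivisors R) : (xMulSupSpan J g).colon {X} = J := by
  ext f
  rw [mem_colon_X, X_mul_mem_xMulSupSpan hg hg₀]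

theorem eq_xMulSupSpan {I : Ideal R[X]} {g : R[X]} (hg : g ∈ I)
    (hI : I.map constantCoeff = Ideal.span {g.coeff 0}) : I = xMulSupSpan (I.colon {X}) g := by
  refine le_antisymm (fun f hf => ?_) (sup_le ?_ ?_)
  · obtain ⟨r, hr⟩ := Ideal.mem_span_singleton'.1 (hI ▸ mem_map_constantCoeff.2 ⟨f, hf, rfl⟩)
    obtain ⟨h, hh⟩ : X ∣ f - C r * g := X_dvd_iff.2 (by simp [hr])
    refine (mem_xMulSupSpan (Ideal.le_colon hg)).2 ⟨r, h, ?_, (sub_eq_iff_eq_add'.1 hh)⟩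
    rw [mem_colon_X, ← hh]
    exact I.sub_mem hf (I.mul_mem_left _ hg)
  · rw [Ideal.span_singleton_mul_le_iff]
    exact fun j hj => mem_colon_X.1 hj
  · rwa [Ideal.span_singleton_le_iff_mem]

theorem xMulSupSpan_add_X_mul_eq_iff {J : Ideal R[X]} {g h k : R[X]} (hg : g ∈ J)
    (hg₀ : g.coeff 0 ∈ nonZeroDivisors R) (hh : h ∈ J.colon {X}) :
    xMulSupSpan J (g + X * h) = xMulSupSpan J (g + X * k) ↔ k - h ∈ J := by
  have hgh := J.add_mem hg (mem_colon_X.1 hh)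
  have hgh₀ : (g + X * h).coeff 0 ∈ nonZeroDivisors R := by simpa using hg₀
  have hdiff : g + X * k = (g + X * h) + X * (k - h) := by ring
  constructor
  · intro heq
    rw [← X_mul_mem_xMulSupSpan hgh hgh₀,
      ← (xMulSupSpan J (g + X * h)).add_mem_iff_right (self_mem_xMulSupSpan J _), ← hdiff, heq]
    exact self_mem_xMulSupSpan J _
  · intro hkh
    have hmem : g + X * k ∈ xMulSupSpan J (g + X * h) := by
      rw [hdiff]
      exact Ideal.add_mem _ (self_mem_xMulSupSpan J _) ((X_mul_mem_xMulSupSpan hgh hgh₀).2 hkh)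
    rw [eq_xMulSupSpan hmem (by rw [map_constantCoeff_xMulSupSpan]; simp),
      colon_X_xMulSupSpan hgh hgh₀]

/-- The ideals `I` of `R[X]` with `(I : X) = J` whose constant coefficients form `(d)`. -/
def colonFiber (J : Ideal R[X]) (d : R) : Set (Ideal R[X]) :=
  {I | I.colon {X} = J ∧ I.map constantCoeff = Ideal.span {d}}

theorem colonFiber_eq_empty {J : Ideal R[X]} {d : R} (hd : d ∉ J.map constantCoeff) :
    colonFiber J d = ∅ := by
  refine Set.eq_empty_of_forall_notMem fun I ⟨hIJ, hId⟩ => hd ?_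
  exact Ideal.map_mono (hIJ ▸ Ideal.le_colon) (hId ▸ Ideal.mem_span_singleton_self d)

theorem card_colonFiber_eq_relIndex {J : Ideal R[X]} {d : R} (hd₀ : d ∈ nonZeroDivisors R)
    (hd : d ∈ J.map constantCoeff) :
    Nat.card (colonFiber J d) = J.toAddSubgroup.relIndex (J.colon {X}).toAddSubgroup := by
  obtain ⟨g, hg, rfl⟩ := mem_map_constantCoeff.1 hd
  let φ (h : J.colon {X}) : colonFiber J (g.coeff 0) :=
    ⟨xMulSupSpan J (g + X * (h : R[X])), colon_X_xMulSupSpan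
      (J.add_mem hg (mem_colon_X.1 h.2)) (by simpa using hd₀), by
      simp [map_constantCoeff_xMulSupSpan]⟩
  have hφ : Function.Surjective φ := by
    rintro ⟨I, rfl, hI⟩
    obtain ⟨f, hf, hfg⟩ := mem_map_constantCoeff.1 (hI ▸ Ideal.mem_span_singleton_self (g.coeff 0))
    obtain ⟨h, hh⟩ : X ∣ f - g := X_dvd_iff.2 (by simp [hfg])
    refine ⟨⟨h, ?_⟩, Subtype.ext ?_⟩
    · rw [mem_colon_X, ← hh]
      exact Ideal.sub_mem _ (Ideal.le_colon hf) hg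
    · change xMulSupSpan _ (g + X * h) = I
      rw [← hh, add_sub_cancel]
      exact (eq_xMulSupSpan hf (hfg ▸ hI)).symm
  have hker (h k : J.colon {X}) : φ h = φ k ↔ (k - h : R[X]) ∈ J :=
    Subtype.ext_iff.trans (xMulSupSpan_add_X_mul_eq_iff hg hd₀ h.2)
  rw [← Nat.card_congr (Setoid.quotientKerEquivOfSurjective φ hφ)]
  refine Nat.card_congr (Quotient.congrRight fun h k => ?_)
  rw [Setoid.ker_def, hker, QuotientAddGroup.leftRel_apply, neg_add_eq_sub]
  rfl

theorem card_colonFiber {J : Ideal R[X]} {d : R} (hd₀ : d ∈ nonZeroDivisors R)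
    (hd : d ∈ J.map constantCoeff) (hJ : J.cardQuot ≠ 0) :
    Nat.card (colonFiber J d) = (J.map constantCoeff).cardQuot := by
  have hcard : Nat.card (colonFiber J d) * (J.colon {X}).cardQuot = J.cardQuot := by
    rw [card_colonFiber_eq_relIndex hd₀ hd]
    exact AddSubgroup.relIndex_mul_index (Ideal.le_colon (I := J) (S := {X}))
  rw [cardQuot_eq_cardQuot_map_mul_cardQuot_colon_X J] at hcard hJ
  exact Nat.eq_of_mul_eq_mul_right (Nat.pos_of_ne_zero (right_ne_zero_of_mul hJ)) hcard

end ColonIdeal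

section ShiftedZeta

open ArithmeticFunction
open scoped ENNReal

/-- The arithmetic function with value `e ^ p` at `e ^ (p + 1)` and zero elsewhere, whose Dirichlet
series is `ζ((p + 1)s - p)`. -/
def shiftedZeta (p : ℕ) : ArithmeticFunction ℕ where
  toFun k := ∑ e ∈ k.divisors with e ^ (p + 1) = k, e ^ p
  map_zero' := by simp

theorem shiftedZeta_apply (p k : ℕ) :
    shiftedZeta p k = ∑ e ∈ k.divisors with e ^ (p + 1) = k, e ^ p :=
  rfl

theorem shiftedZeta_pow (p : ℕ) {e : ℕ} (he : e ≠ 0) : shiftedZeta p (e ^ (p + 1)) = e ^ p := by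
  have hroot : {d ∈ (e ^ (p + 1)).divisors | d ^ (p + 1) = e ^ (p + 1)} = {e} := by
    ext d
    simp only [Finset.mem_filter, Nat.mem_divisors, Finset.mem_singleton]
    refine ⟨fun h => Nat.pow_left_injective p.succ_ne_zero h.2, ?_⟩
    rintro rfl
    exact ⟨⟨dvd_pow_self _ p.succ_ne_zero, pow_ne_zero _ he⟩, rfl⟩
  rw [shiftedZeta_apply, hroot, Finset.sum_singleton]

theorem exists_pow_eq_of_shiftedZeta_ne_zero {p k : ℕ} (hk : shiftedZeta p k ≠ 0) :
    ∃ e, e ^ (p + 1) = k := by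
  obtain ⟨e, he, -⟩ := Finset.exists_ne_zero_of_sum_ne_zero (shiftedZeta_apply p k ▸ hk)
  exact ⟨e, (Finset.mem_filter.1 he).2⟩

theorem tsum_shiftedZeta_mul (p : ℕ) (g : ℕ+ → ℝ≥0∞) :
    ∑' k : ℕ+, (shiftedZeta p k : ℝ≥0∞) * g k = ∑' e : ℕ+, (e : ℝ≥0∞) ^ p * g (e ^ (p + 1)) := by
  have hinj : Function.Injective fun e : ℕ+ => e ^ (p + 1) :=
    pow_left_injective p.succ_ne_zero
  rw [← hinj.tsum_eq]
  · refine tsum_congr fun e => ?_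
    rw [PNat.pow_coe, shiftedZeta_pow p e.ne_zero, Nat.cast_pow]
  · intro k hk
    obtain ⟨e, he⟩ := exists_pow_eq_of_shiftedZeta_ne_zero
      (Nat.cast_ne_zero.1 (left_ne_zero_of_mul hk))
    have he₀ : 0 < e := Nat.pos_of_ne_zero fun h => k.ne_zero (by simp [← he, h])
    exact ⟨⟨e, he₀⟩, PNat.eq he⟩

theorem tsum_mul_arithmeticFunction (f h : ArithmeticFunction ℕ) (g : ℕ+ → ℝ≥0∞) :
    ∑' k : ℕ+, ((f * h) k : ℝ≥0∞) * g k =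
      ∑' (a : ℕ+) (b : ℕ+), (f a : ℝ≥0∞) * h b * g (a * b) := by
  rw [← ENNReal.tsum_prod (f := fun a b : ℕ+ => (f a : ℝ≥0∞) * h b * g (a * b)),
    ← sigmaAntidiagonalEquivProd.tsum_eq, ENNReal.tsum_sigma']
  refine tsum_congr fun k => ?_
  rw [mul_apply, Nat.cast_sum, Finset.sum_mul, tsum_fintype, Finset.univ_eq_attach,
    ← Finset.sum_attach]
  refine Finset.sum_congr rfl fun x _ => ?_
  have hx : (sigmaAntidiagonalEquivProd ⟨k, x⟩).1 * (sigmaAntidiagonalEquivProd ⟨k, x⟩).2 = k :=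
    PNat.eq (Nat.mem_divisorsAntidiagonal.1 x.2).1
  rw [hx, Nat.cast_mul]
  rfl

end ShiftedZeta

section IdealCount

open Polynomial
open scoped ENNReal

theorem tsum_comp_eq_tsum_card_fiber_mul {α β : Type*} (f : α → β) (g : β → ℝ≥0∞) :
    ∑' a, g (f a) = ∑' b, (ENat.card {a // f a = b} : ℝ≥0∞) * g b := by
  rw [← (Equiv.sigmaFiberEquiv f).tsum_eq, ENNReal.tsum_sigma']
  refine tsum_congr fun b => ?_
  rw [← ENNReal.tsum_const]
  exact tsum_congr fun a => congrArg g a.2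

/-- The ideals of finite index in `ℤ[X]` containing `X ^ n`, i.e. the ideals of finite index in
`ℤ[X] / (X ^ n)`. -/
def FiniteIndexIdeal (n : ℕ) : Type :=
  {I : Ideal ℤ[X] // X ^ n ∈ I ∧ I.cardQuot ≠ 0}

namespace FiniteIndexIdeal

variable {n : ℕ}

/-- The index `[ℤ[X] : I]`. -/
noncomputable def index (I : FiniteIndexIdeal n) : ℕ+ :=
  ⟨I.1.cardQuot, Nat.pos_of_ne_zero I.2.2⟩

theorem cardQuot_map_constantCoeff_ne_zero (I : FiniteIndexIdeal n) :
    (I.1.map constantCoeff).cardQuot ≠ 0 :=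
  left_ne_zero_of_mul (cardQuot_eq_cardQuot_map_mul_cardQuot_colon_X I.1 ▸ I.2.2)

/-- The positive generator of the ideal of constant coefficients of `I`. -/
noncomputable def constGen (I : FiniteIndexIdeal n) : ℕ+ :=
  ⟨(I.1.map constantCoeff).cardQuot, Nat.pos_of_ne_zero I.cardQuot_map_constantCoeff_ne_zero⟩

/-- The colon ideal `(I : X)`. -/
noncomputable def colonX (I : FiniteIndexIdeal (n + 1)) : FiniteIndexIdeal n :=
  ⟨I.1.colon {X}, mem_colon_X.2 (pow_succ' (X : ℤ[X]) n ▸ I.2.1),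
    right_ne_zero_of_mul (cardQuot_eq_cardQuot_map_mul_cardQuot_colon_X I.1 ▸ I.2.2)⟩

theorem index_eq_constGen_mul_index_colonX (I : FiniteIndexIdeal (n + 1)) :
    I.index = I.constGen * I.colonX.index :=
  PNat.eq (cardQuot_eq_cardQuot_map_mul_cardQuot_colon_X I.1)

theorem span_constGen (I : FiniteIndexIdeal n) :
    Ideal.span {((I.constGen : ℕ) : ℤ)} = I.1.map constantCoeff :=
  Int.ideal_span_absNorm_eq_self _

theorem constGen_eq_iff (I : FiniteIndexIdeal n) (d : ℕ+) :
    I.constGen = d ↔ I.1.map constantCoeff = Ideal.span {((d : ℕ) : ℤ)} := by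
  rw [← span_constGen, Ideal.span_singleton_eq_span_singleton,
    Int.associated_iff_natAbs, Int.natAbs_natCast, Int.natAbs_natCast, PNat.coe_inj]

theorem constGen_dvd_iff (I : FiniteIndexIdeal n) (d : ℕ+) :
    I.constGen ∣ d ↔ ((d : ℕ) : ℤ) ∈ I.1.map constantCoeff := by
  rw [← span_constGen, Ideal.mem_span_singleton, Int.natCast_dvd_natCast, PNat.dvd_iff]

/-- An ideal in the fibre of `(J, d)` automatically has finite index and contains `X ^ (n + 1)`. -/
noncomputable def fiberEquiv (J : FiniteIndexIdeal n) (d : ℕ+) :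
    {I : FiniteIndexIdeal (n + 1) // (I.colonX, I.constGen) = (J, d)} ≃
      colonFiber J.1 ((d : ℕ) : ℤ) where
  toFun I := ⟨I.1.1, congrArg (·.1.1) I.2, (I.1.constGen_eq_iff d).1 (congrArg Prod.snd I.2)⟩
  invFun I :=
    have hpow : X ^ (n + 1) ∈ I.1 := by
      rw [pow_succ', ← mem_colon_X, I.2.1]
      exact J.2.1
    have hindex : I.1.cardQuot ≠ 0 := by
      rw [cardQuot_eq_cardQuot_map_mul_cardQuot_colon_X, I.2.1, I.2.2]
      refine mul_ne_zero ?_ J.2.2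
      change Ideal.absNorm _ ≠ 0
      simp
    ⟨⟨I.1, hpow, hindex⟩, Prod.ext (Subtype.ext I.2.1) ((constGen_eq_iff _ d).2 I.2.2)⟩
  left_inv _ := rfl
  right_inv _ := rfl

theorem card_fiber [DecidableRel (α := ℕ+) (· ∣ ·)] (J : FiniteIndexIdeal n) (d : ℕ+) :
    ENat.card {I : FiniteIndexIdeal (n + 1) // (I.colonX, I.constGen) = (J, d)} =
      if J.constGen ∣ d then ((J.constGen : ℕ) : ℕ∞) else 0 := by
  rw [ENat.card_congr (fiberEquiv J d)]
  split_ifs with hd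
  · have hcard := card_colonFiber (mem_nonZeroDivisors_of_ne_zero (by simp))
      ((J.constGen_dvd_iff d).1 hd) J.2.2
    have hfin : Finite (colonFiber J.1 ((d : ℕ) : ℤ)) :=
      Nat.finite_of_card_ne_zero (hcard ▸ J.cardQuot_map_constantCoeff_ne_zero)
    rw [ENat.card_eq_coe_natCard, hcard]
    rfl
  · rw [colonFiber_eq_empty (mt (J.constGen_dvd_iff d).2 hd)]
    simp

theorem tsum_index_constGen_succ (g : ℕ+ → ℕ+ → ℝ≥0∞) :
    ∑' I : FiniteIndexIdeal (n + 1), g I.index I.constGen =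
      ∑' (J : FiniteIndexIdeal n) (e : ℕ+),
        (J.constGen : ℝ≥0∞) * g (J.constGen * e * J.index) (J.constGen * e) := by
  classical
  simp_rw [index_eq_constGen_mul_index_colonX]
  rw [tsum_comp_eq_tsum_card_fiber_mul
    (fun I : FiniteIndexIdeal (n + 1) => (I.colonX, I.constGen)) fun p => g (p.2 * p.1.index) p.2,
    ENNReal.tsum_prod']
  refine tsum_congr fun J => ?_
  have hinj : Function.Injective fun e => J.constGen * e := mul_right_injective J.constGen
  rw [← hinj.tsum_eq]
  · refine tsum_congr fun e => ?_
    rw [card_fiber, if_pos (dvd_mul_right _ e)]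
    rfl
  · intro d hd
    rw [Function.mem_support, card_fiber] at hd
    obtain ⟨e, rfl⟩ : J.constGen ∣ d := by
      by_contra h
      simp [h] at hd
    exact ⟨e, rfl⟩

theorem val_eq_top (I : FiniteIndexIdeal 0) : I.1 = ⊤ :=
  (Ideal.eq_top_iff_one _).2 (pow_zero (X : ℤ[X]) ▸ I.2.1)

theorem index_eq_one (I : FiniteIndexIdeal 0) : I.index = 1 :=
  PNat.eq ((congrArg Submodule.cardQuot I.val_eq_top).trans (Submodule.cardQuot_top ..))

theorem constGen_eq_one (I : FiniteIndexIdeal 0) : I.constGen = 1 :=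
  (I.constGen_eq_iff 1).2 (by simp [I.val_eq_top, Ideal.map_top])

noncomputable instance : Unique (FiniteIndexIdeal 0) where
  default := ⟨⊤, trivial, by simp⟩
  uniq I := Subtype.ext I.val_eq_top

/-- Summing over the fibres of `I ↦ (I : X)` multiplies the weight by `constGen`, which is why the
induction on `n` needs an arbitrary power of it. -/
theorem tsum_constGen_pow_mul (n i : ℕ) (g : ℕ+ → ℝ≥0∞) :
    ∑' I : FiniteIndexIdeal n, (I.constGen : ℝ≥0∞) ^ i * g (I.index * I.constGen ^ i) =
      ∑' k : ℕ+, ((∏ j ∈ Finset.range n, shiftedZeta (i + j)) k : ℝ≥0∞) * g k := by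
  induction n generalizing i g with
  | zero =>
    rw [tsum_eq_single default fun I hI => absurd (Unique.eq_default I) hI, tsum_eq_single 1]
    · simp [index_eq_one, constGen_eq_one]
    · intro k hk
      simp [ArithmeticFunction.one_apply_ne (PNat.coe_eq_one_iff.not.2 hk)]
  | succ n ih =>
    calc _ = ∑' (J : FiniteIndexIdeal n) (e : ℕ+), (e : ℝ≥0∞) ^ i *
            ((J.constGen : ℝ≥0∞) ^ (i + 1) *
              g (e ^ (i + 1) * (J.index * J.constGen ^ (i + 1)))) := by
          rw [tsum_index_constGen_succ fun k d => (d : ℝ≥0∞) ^ i * g (k * d ^ i)]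
          refine tsum_congr fun J => tsum_congr fun e => ?_
          have hk : J.constGen * e * J.index * (J.constGen * e) ^ i =
              e ^ (i + 1) * (J.index * J.constGen ^ (i + 1)) := by
            ring
          rw [hk, PNat.mul_coe, Nat.cast_mul]
          ring
      _ = ∑' e : ℕ+, (e : ℝ≥0∞) ^ i * ∑' k : ℕ+,
            ((∏ j ∈ Finset.range n, shiftedZeta (i + 1 + j)) k : ℝ≥0∞) *
              g (e ^ (i + 1) * k) := by
          rw [ENNReal.tsum_comm]
          refine tsum_congr fun e => ?_
          rw [ENNReal.tsum_mul_left, ih (i + 1) fun k => g (e ^ (i + 1) * k)]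
      _ = _ := by
          rw [Finset.prod_range_succ', mul_comm, tsum_mul_arithmeticFunction]
          simp_rw [mul_assoc, ENNReal.tsum_mul_left]
          rw [tsum_shiftedZeta_mul (i + 0) fun a => ∑' b : ℕ+, _ * g (a * b)]
          simp_rw [add_zero, add_assoc, add_comm 1]

theorem encard_index_eq (n : ℕ) (k : ℕ+) :
    Set.encard {I : FiniteIndexIdeal n | I.index = k} =
      (∏ j ∈ Finset.range n, shiftedZeta j) k := by
  have h := tsum_constGen_pow_mul n 0 (Set.indicator {k} 1)
  simp only [pow_zero, one_mul, mul_one, zero_add] at h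
  rw [tsum_eq_single k fun l hl => by simp [hl]] at h
  have hset : ∑' I : FiniteIndexIdeal n, Set.indicator {k} (1 : ℕ+ → ℝ≥0∞) I.index =
      ({I : FiniteIndexIdeal n | I.index = k}.encard : ℝ≥0∞) := by
    rw [← ENNReal.tsum_set_one, tsum_subtype _ fun _ => (1 : ℝ≥0∞)]
    rfl
  rw [hset, Set.indicator_of_mem (Set.mem_singleton k), Pi.one_apply, mul_one] at h
  exact_mod_cast h

end FiniteIndexIdeal

theorem idealCount_quotient {R : Type} [CommRing R] (𝔞 : Ideal R) (k : ℕ) :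
    idealCount (R ⧸ 𝔞) k = Set.ncard {I : Ideal R | 𝔞 ≤ I ∧ I.cardQuot = k} := by
  have hsurj : Function.Surjective (Ideal.Quotient.mk 𝔞) := Ideal.Quotient.mk_surjective
  have hindex (I : Ideal (R ⧸ 𝔞)) :
      (I.comap (Ideal.Quotient.mk 𝔞)).cardQuot = Nat.card ((R ⧸ 𝔞) ⧸ I) :=
    AddSubgroup.index_comap_of_surjective I.toAddSubgroup
      (f := (Ideal.Quotient.mk 𝔞).toAddMonoidHom) hsurj
  rw [idealCount, ← Set.ncard_image_of_injective _ (Ideal.comap_injective_of_surjective _ hsurj)]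
  congr 1
  ext I
  constructor
  · rintro ⟨I, hI, rfl⟩
    exact ⟨𝔞.mk_ker.ge.trans (Ideal.comap_mono bot_le), (hindex I).trans hI⟩
  · rintro ⟨h𝔞, hI⟩
    have hcomap : (I.map (Ideal.Quotient.mk 𝔞)).comap (Ideal.Quotient.mk 𝔞) = I := by
      rw [Ideal.comap_map_of_surjective' _ hsurj, Ideal.mk_ker, sup_eq_left.2 h𝔞]
    exact ⟨_, (hindex _).symm.trans (hcomap.symm ▸ hI), hcomap⟩

theorem idealCount_int_poly_quot_pow (n : ℕ) {k : ℕ} (hk : k ≠ 0) :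
    idealCount (ℤ[X] ⧸ Ideal.span {(X : ℤ[X]) ^ n}) k =
      (∏ j ∈ Finset.range n, shiftedZeta j) k := by
  lift k to ℕ+ using Nat.pos_of_ne_zero hk
  have himage : {I : Ideal ℤ[X] | Ideal.span {(X : ℤ[X]) ^ n} ≤ I ∧ I.cardQuot = k} =
      Subtype.val '' {I : FiniteIndexIdeal n | I.index = k} := by
    ext I
    simp only [Set.mem_ofPred_eq, Ideal.span_singleton_le_iff_mem]
    constructor
    · rintro ⟨hX, hI⟩
      exact ⟨⟨I, hX, hI ▸ k.ne_zero⟩, PNat.eq hI, rfl⟩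
    · rintro ⟨I, hI, rfl⟩
      exact ⟨I.2.1, congrArg PNat.val hI⟩
  rw [idealCount_quotient, himage]
  exact (Set.ncard_image_of_injective _ Subtype.val_injective).trans
    (congrArg ENat.toNat (FiniteIndexIdeal.encard_index_eq n k))

end IdealCount

section HarmonicSum

open Asymptotics Filter Real

/-- The harmonic sum `∑ V(y / e) / e` over the positive integers `e ≤ y`. -/
noncomputable def harmonicSum (V : ℝ → ℝ) (y : ℝ) : ℝ :=
  ∑ e ∈ Finset.Ioc 0 ⌊y⌋₊, V (y / e) / e

theorem one_le_div_of_mem_Ioc_floor {y : ℝ} {e : ℕ} (he : e ∈ Finset.Ioc 0 ⌊y⌋₊) : 1 ≤ y / e := by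
  obtain ⟨he₀, hey⟩ := Finset.mem_Ioc.1 he
  rw [one_le_div (Nat.cast_pos.2 he₀)]
  exact (Nat.le_floor_iff' he₀.ne').1 hey

theorem integral_log_div_pow_div (m : ℕ) {y b : ℝ} (hy : 0 < y) (hb : 0 < b) :
    ∫ t in (1 : ℝ)..b, log (y / t) ^ m / t =
      (log y ^ (m + 1) - log (y / b) ^ (m + 1)) / (m + 1) := by
  have hpos {t : ℝ} (ht : t ∈ Set.uIcc 1 b) : 0 < t := (lt_min one_pos hb).trans_le ht.1
  have hlog {t : ℝ} (ht : t ∈ Set.uIcc 1 b) : HasDerivAt (fun t => log (y / t)) (-1 / t) t := by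
    have ht₀ := (hpos ht).ne'
    refine (((hasDerivAt_const t y).fun_div (hasDerivAt_id t) ht₀).log
      (div_ne_zero hy.ne' ht₀)).congr_deriv ?_
    simp only [id]
    field_simp
    ring
  have hderiv (t : ℝ) (ht : t ∈ Set.uIcc 1 b) :
      HasDerivAt (fun t => -(log (y / t) ^ (m + 1) / (m + 1))) (log (y / t) ^ m / t) t := by
    refine (((hlog ht).fun_pow (m + 1)).div_const (m + 1 : ℝ)).fun_neg.congr_deriv ?_
    rw [Nat.add_sub_cancel]
    push_cast
    field_simp
  have hcont : ContinuousOn (fun t => log (y / t) ^ m / t) (Set.uIcc 1 b) := fun t ht =>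
    (((hlog ht).continuousAt.pow m).div continuousAt_id (hpos ht).ne').continuousWithinAt
  rw [intervalIntegral.integral_eq_sub_of_hasDerivAt hderiv hcont.intervalIntegrable, div_one]
  ring

theorem antitoneOn_log_div_pow_div (m : ℕ) (y : ℝ) :
    AntitoneOn (fun t => log (y / t) ^ m / t) (Set.Ioc 0 y) := by
  intro s hs t ht hst
  have hlog : 0 ≤ log (y / t) := log_nonneg ((one_le_div ht.1).2 ht.2)
  have hy : 0 < y := hs.1.trans_le hs.2
  have hlog_le : log (y / t) ≤ log (y / s) :=
    log_le_log (div_pos hy ht.1) (div_le_div_of_nonneg_left hy.le hs.1 hst)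
  exact div_le_div₀ (pow_nonneg (hlog.trans hlog_le) m) (pow_le_pow_left₀ hlog hlog_le m) hs.1 hst

theorem log_div_floor_mem_Icc {y : ℝ} (hy : 1 ≤ y) : log (y / ⌊y⌋₊) ∈ Set.Icc 0 1 := by
  have hfloor : (1 : ℝ) ≤ ⌊y⌋₊ := Nat.one_le_cast.2 (Nat.one_le_floor_iff _ |>.2 hy)
  have hpos : (0 : ℝ) < ⌊y⌋₊ := one_pos.trans_le hfloor
  have hle : y / ⌊y⌋₊ ≤ 2 := by
    rw [div_le_iff₀ hpos]
    linarith [Nat.lt_floor_add_one y]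
  have hone : 1 ≤ y / ⌊y⌋₊ := (one_le_div hpos).2 (Nat.floor_le (one_pos.le.trans hy))
  refine ⟨log_nonneg hone, ?_⟩
  linarith [log_le_sub_one_of_pos (one_pos.trans_le hone)]

theorem abs_harmonicSum_log_pow_sub_le (m : ℕ) {y : ℝ} (hy : 1 ≤ y) :
    |harmonicSum (fun z => log z ^ m) y - log y ^ (m + 1) / (m + 1)| ≤ log y ^ m + 1 := by
  set N := ⌊y⌋₊
  have hy₀ : 0 < y := one_pos.trans_le hy
  have hN₁ : 1 ≤ N := (Nat.one_le_floor_iff y).2 hy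
  have hN₀ : (0 : ℝ) < N := Nat.cast_pos.2 hN₁
  obtain ⟨hlog₀, hlog₁⟩ := log_div_floor_mem_Icc hy
  have hanti : AntitoneOn (fun t => log (y / t) ^ m / t) (Set.Icc (1 : ℕ) N) :=
    (antitoneOn_log_div_pow_div m y).mono fun t ht =>
      ⟨one_pos.trans_le (Nat.cast_one (R := ℝ) ▸ ht.1), ht.2.trans (Nat.floor_le hy₀.le)⟩
  have hintegral := integral_log_div_pow_div m hy₀ hN₀
  have hlower := hanti.integral_le_sum_Ico hN₁
  have hupper := hanti.sum_le_integral_Ico hN₁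
  have hfirst : harmonicSum (fun z => log z ^ m) y = log y ^ m +
      ∑ e ∈ Finset.Ico 1 N, log (y / ↑(e + 1)) ^ m / ↑(e + 1) := by
    rw [Finset.sum_Ico_add' (fun e : ℕ => log (y / e) ^ m / e) 1 N 1]
    exact (Finset.sum_eq_sum_Ico_succ_bot (Nat.lt_succ_of_le hN₁) _).trans (by simp)
  have hlast : harmonicSum (fun z => log z ^ m) y =
      ∑ e ∈ Finset.Ico 1 N, log (y / e) ^ m / e + log (y / N) ^ m / N :=
    Finset.sum_Ico_succ_top hN₁ fun e : ℕ => log (y / e) ^ m / e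
  have hterm : 0 ≤ log (y / N) ^ m / N := by positivity
  have hrest : 0 ≤ log (y / N) ^ (m + 1) / (m + 1) := by positivity
  have hrest_le : log (y / N) ^ (m + 1) / (m + 1) ≤ 1 :=
    div_le_one_of_le₀ ((pow_le_one₀ hlog₀ hlog₁).trans (by simp)) (by positivity)
  rw [Nat.cast_one, hintegral, sub_div] at hlower hupper
  rw [abs_le]
  constructor
  · linarith [pow_nonneg (log_nonneg hy) m]
  · linarith

theorem isLittleO_log_pow_log_pow {m k : ℕ} (h : m < k) :
    (fun y => log y ^ m) =o[atTop] fun y => log y ^ k :=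
  (isLittleO_pow_pow_atTop_of_lt h).comp_tendsto tendsto_log_atTop

theorem isLittleO_const_log_pow_succ (C : ℝ) (m : ℕ) :
    (fun _ => C) =o[atTop] fun y => log y ^ (m + 1) :=
  isLittleO_const_left.2 (Or.inr <| tendsto_abs_atTop_atTop.comp <|
    (tendsto_pow_atTop m.succ_ne_zero).comp tendsto_log_atTop)

theorem isLittleO_harmonicSum_log_pow_sub (m : ℕ) :
    (fun y => harmonicSum (fun z => log z ^ m) y - log y ^ (m + 1) / (m + 1)) =o[atTop]
      fun y => log y ^ (m + 1) := by
  have hbound : (fun y => log y ^ m + 1) =o[atTop] fun y => log y ^ (m + 1) :=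
    (isLittleO_log_pow_log_pow m.lt_succ_self).add (isLittleO_const_log_pow_succ 1 m)
  refine IsBigO.trans_isLittleO (.of_norm_eventuallyLE ?_) hbound
  filter_upwards [eventually_ge_atTop 1] with y hy
  exact abs_harmonicSum_log_pow_sub_le m hy

theorem harmonicSum_sub (V W : ℝ → ℝ) (y : ℝ) :
    harmonicSum (fun z => V z - W z) y = harmonicSum V y - harmonicSum W y := by
  simp [harmonicSum, sub_div]

theorem harmonicSum_const_mul (b : ℝ) (V : ℝ → ℝ) (y : ℝ) :
    harmonicSum (fun z => b * V z) y = b * harmonicSum V y := by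
  simp [harmonicSum, Finset.mul_sum, mul_div_assoc]

/-- The term `C / z` absorbs bounded arguments, its harmonic sum being `C⌊y⌋ / y`. -/
theorem abs_harmonicSum_le {R W : ℝ → ℝ} {C : ℝ} (hC : 0 ≤ C)
    (hR : ∀ z, 1 ≤ z → |R z| ≤ W z + C / z) {y : ℝ} (hy : 0 < y) :
    |harmonicSum R y| ≤ harmonicSum W y + C := by
  have hterm (e : ℕ) (he : e ∈ Finset.Ioc 0 ⌊y⌋₊) :
      |R (y / e) / e| ≤ W (y / e) / e + C / y := by
    have he₀ : (0 : ℝ) < e := Nat.cast_pos.2 (Finset.mem_Ioc.1 he).1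
    rw [abs_div, Nat.abs_cast, div_le_iff₀ he₀]
    refine (hR _ (one_le_div_of_mem_Ioc_floor he)).trans_eq ?_
    field_simp
  calc |harmonicSum R y|
      ≤ ∑ e ∈ Finset.Ioc 0 ⌊y⌋₊, (W (y / e) / e + C / y) :=
        (Finset.abs_sum_le_sum_abs _ _).trans (Finset.sum_le_sum hterm)
    _ = harmonicSum W y + ⌊y⌋₊ * (C / y) := by
        simp [Finset.sum_add_distrib, harmonicSum]
    _ ≤ harmonicSum W y + y * (C / y) := by
        gcongr
        exact Nat.floor_le hy.le
    _ = harmonicSum W y + C := by rw [mul_div_cancel₀ C hy.ne']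

theorem eventually_harmonicSum_log_pow_le (m : ℕ) :
    ∀ᶠ y in atTop, harmonicSum (fun z => log z ^ m) y ≤ 2 * log y ^ (m + 1) := by
  filter_upwards [isLittleO_iff.1 (isLittleO_harmonicSum_log_pow_sub m) one_pos,
    eventually_ge_atTop 1] with y hy hy₁
  have hpow : 0 ≤ log y ^ (m + 1) := pow_nonneg (log_nonneg hy₁) _
  rw [norm_eq_abs, norm_eq_abs, abs_of_nonneg hpow] at hy
  have herror := (le_abs_self _).trans hy
  have hmain := div_le_self hpow (le_add_of_nonneg_left (Nat.cast_nonneg (α := ℝ) m))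
  linarith

theorem exists_abs_le_mul_log_pow_add_div {R : ℝ → ℝ} {m : ℕ}
    (hR : R =o[atTop] fun z => log z ^ m)
    (hbdd : ∀ Y, ∃ M, ∀ z ∈ Set.Icc 1 Y, |R z| ≤ M) {ε : ℝ} (hε : 0 < ε) :
    ∃ C, 0 ≤ C ∧ ∀ z, 1 ≤ z → |R z| ≤ ε * log z ^ m + C / z := by
  obtain ⟨Y, hY⟩ := eventually_atTop.1 (isLittleO_iff.1 hR hε)
  obtain ⟨M, hM⟩ := hbdd Y
  refine ⟨|M| * |Y|, by positivity, fun z hz => ?_⟩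
  have hlog_nonneg : 0 ≤ log z ^ m := pow_nonneg (log_nonneg hz) m
  rcases le_total Y z with hYz | hzY
  · have hRz := hY z hYz
    rw [norm_eq_abs, norm_eq_abs, abs_of_nonneg hlog_nonneg] at hRz
    exact hRz.trans (le_add_of_nonneg_right (by positivity))
  · have hMz : |M| ≤ |M| * |Y| / z := by
      rw [le_div_iff₀ (one_pos.trans_le hz)]
      gcongr
      exact hzY.trans (le_abs_self Y)
    have hRz := (hM z ⟨hz, hzY⟩).trans ((le_abs_self M).trans hMz)
    exact hRz.trans (le_add_of_nonneg_left (by positivity))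

theorem isLittleO_harmonicSum {R : ℝ → ℝ} {m : ℕ} (hR : R =o[atTop] fun z => log z ^ m)
    (hbdd : ∀ Y, ∃ M, ∀ z ∈ Set.Icc 1 Y, |R z| ≤ M) :
    harmonicSum R =o[atTop] fun y => log y ^ (m + 1) := by
  refine isLittleO_iff.2 fun ε hε => ?_
  have hε₄ : 0 < ε / 4 := by positivity
  obtain ⟨C, hC, hpoint⟩ := exists_abs_le_mul_log_pow_add_div hR hbdd hε₄
  have hconst := isLittleO_iff.1 (isLittleO_const_log_pow_succ C m) (half_pos hε)
  filter_upwards [eventually_harmonicSum_log_pow_le m, hconst, eventually_ge_atTop 1]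
    with y hlog_y hconst_y hy
  have hsum := abs_harmonicSum_le hC hpoint (one_pos.trans_le hy)
  have hpow : 0 ≤ log y ^ (m + 1) := pow_nonneg (log_nonneg hy) _
  rw [harmonicSum_const_mul] at hsum
  rw [norm_eq_abs, norm_eq_abs, abs_of_nonneg hC, abs_of_nonneg hpow] at hconst_y
  rw [norm_eq_abs, norm_eq_abs, abs_of_nonneg hpow]
  have hscaled := mul_le_mul_of_nonneg_left hlog_y hε₄.le
  linarith

theorem isEquivalent_harmonicSum {V : ℝ → ℝ} {b : ℝ} {m : ℕ} (hb : b ≠ 0)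
    (hV : V ~[atTop] fun z => b * log z ^ m) (hbdd : ∀ Y, ∃ M, ∀ z ∈ Set.Icc 1 Y, |V z| ≤ M) :
    harmonicSum V ~[atTop] fun y => b / (m + 1) * log y ^ (m + 1) := by
  have hR : (fun z => V z - b * log z ^ m) =o[atTop] fun z => log z ^ m :=
    (isLittleO_const_mul_right_iff hb).1 hV.isLittleO
  have hR_bdd (Y : ℝ) : ∃ M, ∀ z ∈ Set.Icc 1 Y, |V z - b * log z ^ m| ≤ M := by
    obtain ⟨M, hM⟩ := hbdd Y
    refine ⟨M + |b| * log Y ^ m, fun z hz => (abs_sub _ _).trans (add_le_add (hM z hz) ?_)⟩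
    have hlog : 0 ≤ log z := log_nonneg hz.1
    rw [abs_mul, abs_pow, abs_of_nonneg hlog]
    have := log_le_log (one_pos.trans_le hz.1) hz.2
    gcongr
  have hmain := (isLittleO_harmonicSum_log_pow_sub m).const_mul_left b
  refine (isLittleO_const_mul_right_iff (div_ne_zero hb (by positivity))).2 ?_
  refine ((isLittleO_harmonicSum hR hR_bdd).add hmain).congr_left fun y => ?_
  rw [Pi.sub_apply, harmonicSum_sub, harmonicSum_const_mul]
  ring

end HarmonicSum

section Summatory

open Asymptotics Filter

/-- The summatory function `∑ f(k)` over the positive integers `k ≤ x`. -/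
noncomputable def summatory (f : ArithmeticFunction ℕ) (x : ℝ) : ℕ :=
  ∑ k ∈ Finset.Ioc 0 ⌊x⌋₊, f k

theorem summatory_mono (f : ArithmeticFunction ℕ) : Monotone (summatory f) := fun _ _ hxy =>
  Finset.sum_le_sum_of_subset (Finset.Ioc_subset_Ioc_right (Nat.floor_mono hxy))

theorem summatory_mul (f g : ArithmeticFunction ℕ) (x : ℝ) :
    summatory (f * g) x = ∑ k ∈ Finset.Ioc 0 ⌊x⌋₊, f k * summatory g (x / k) := by
  simp only [summatory, ArithmeticFunction.sum_Ioc_mul_eq_sum_sum, Nat.floor_div_natCast]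

theorem sum_shiftedZeta_mul (p : ℕ) (h : ℕ → ℕ) {y : ℝ} (hy : 0 ≤ y) :
    ∑ k ∈ Finset.Ioc 0 ⌊y ^ (p + 1)⌋₊, shiftedZeta p k * h k =
      ∑ e ∈ Finset.Ioc 0 ⌊y⌋₊, e ^ p * h (e ^ (p + 1)) := by
  have hmem (e : ℕ) : e ^ (p + 1) ∈ Finset.Ioc 0 ⌊y ^ (p + 1)⌋₊ ↔ e ∈ Finset.Ioc 0 ⌊y⌋₊ := by
    rw [Finset.mem_Ioc, Finset.mem_Ioc, Nat.le_floor_iff (pow_nonneg hy _), Nat.le_floor_iff hy,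
      Nat.cast_pow, pow_le_pow_iff_left₀ e.cast_nonneg hy p.succ_ne_zero,
      Nat.pow_pos_iff, or_iff_left p.succ_ne_zero]
  symm
  refine Finset.sum_of_injOn (· ^ (p + 1)) (Nat.pow_left_injective p.succ_ne_zero).injOn
    (fun e he => (hmem e).2 he) (fun k hk hk' => ?_) fun e he => ?_
  · by_contra hne
    obtain ⟨e, rfl⟩ := exists_pow_eq_of_shiftedZeta_ne_zero (left_ne_zero_of_mul hne)
    exact hk' ⟨e, (hmem e).1 hk, rfl⟩
  · rw [shiftedZeta_pow p (Finset.mem_Ioc.1 he).1.ne']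

theorem summatory_shiftedZeta_mul (p : ℕ) (f : ArithmeticFunction ℕ) {y : ℝ} (hy : 0 < y) :
    (summatory (shiftedZeta p * f) (y ^ (p + 1)) : ℝ) =
      y ^ (p + 1) * harmonicSum (fun z => summatory f (z ^ (p + 1)) / z ^ (p + 1)) y := by
  rw [summatory_mul, sum_shiftedZeta_mul p (fun k => summatory f (y ^ (p + 1) / k)) hy.le,
    harmonicSum, Finset.mul_sum, Nat.cast_sum]
  refine Finset.sum_congr rfl fun e he => ?_
  have he₀ : (e : ℝ) ≠ 0 := Nat.cast_ne_zero.2 (Finset.mem_Ioc.1 he).1.ne'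
  rw [Nat.cast_pow, ← div_pow, Nat.cast_mul, Nat.cast_pow]
  generalize (summatory f ((y / e) ^ (p + 1)) : ℝ) = s
  rw [div_pow, pow_succ (e : ℝ)]
  field_simp

theorem isEquivalent_summatory_shiftedZeta_mul (p m : ℕ) {f : ArithmeticFunction ℕ} {a : ℝ}
    (ha : a ≠ 0)
    (hf : (fun x => (summatory f x : ℝ)) ~[atTop] fun x => a * x * Real.log x ^ m) :
    (fun x => (summatory (shiftedZeta p * f) x : ℝ)) ~[atTop]
      fun x => a / ((p + 1) * (m + 1)) * x * Real.log x ^ (m + 1) := by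
  have hV : (fun z : ℝ => (summatory f (z ^ (p + 1)) : ℝ) / z ^ (p + 1)) ~[atTop]
      fun z => a * (p + 1) ^ m * Real.log z ^ m := by
    refine ((hf.comp_tendsto (tendsto_pow_atTop p.succ_ne_zero)).div
      (IsEquivalent.refl (u := fun z : ℝ => z ^ (p + 1)))).congr_right ?_
    filter_upwards [eventually_gt_atTop 0] with z hz
    simp only [Pi.div_apply, Function.comp_apply, Real.log_pow, Nat.cast_succ, mul_pow]
    field_simp
  have hV_bdd (Y : ℝ) : ∃ M, ∀ z ∈ Set.Icc 1 Y,
      |(summatory f (z ^ (p + 1)) : ℝ) / z ^ (p + 1)| ≤ M := by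
    refine ⟨summatory f (Y ^ (p + 1)), fun z hz => ?_⟩
    have hz₀ : 0 ≤ z := one_pos.le.trans hz.1
    rw [abs_of_nonneg (by positivity)]
    refine (div_le_self (Nat.cast_nonneg _) (one_le_pow₀ hz.1)).trans (Nat.cast_le.2 ?_)
    exact summatory_mono f (pow_le_pow_left₀ hz₀ hz.2 _)
  have hroot : Tendsto (fun x : ℝ => x ^ ((p + 1 : ℕ) : ℝ)⁻¹) atTop atTop :=
    tendsto_rpow_atTop (by positivity)
  have hmul := (IsEquivalent.refl (u := fun y : ℝ => y ^ (p + 1)) (l := atTop)).mul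
    (isEquivalent_harmonicSum (by positivity) hV hV_bdd)
  refine ((hmul.comp_tendsto hroot).congr_left ?_).congr_right ?_
  all_goals
    filter_upwards [eventually_gt_atTop 0] with x hx
    have hx_root := Real.rpow_inv_natCast_pow hx.le p.succ_ne_zero
    simp only [Function.comp_apply, Pi.mul_apply]
  · rw [← summatory_shiftedZeta_mul p f (Real.rpow_pos_of_pos hx _), hx_root]
  · rw [hx_root, Real.log_rpow hx, inv_mul_eq_div, div_pow, Nat.cast_succ, pow_succ (p + 1 : ℝ)]
    field_simp

theorem isEquivalent_summatory_shiftedZeta_zero :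
    (fun x => (summatory (shiftedZeta 0) x : ℝ)) ~[atTop] fun x => x := by
  have hfloor (x : ℝ) : summatory (shiftedZeta 0) x = ⌊x⌋₊ := by
    have hone (k : ℕ) (hk : k ∈ Finset.Ioc 0 ⌊x⌋₊) : shiftedZeta 0 k = 1 := by
      simpa using shiftedZeta_pow 0 (Finset.mem_Ioc.1 hk).1.ne'
    rw [summatory, Finset.sum_congr rfl hone]
    simp
  simp only [hfloor]
  exact isEquivalent_nat_floor

theorem isEquivalent_summatory_prod_shiftedZeta (n : ℕ) :
    (fun x => (summatory (∏ j ∈ Finset.range (n + 1), shiftedZeta j) x : ℝ)) ~[atTop]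
      fun x => 1 / ((n + 1).factorial * n.factorial) * x * Real.log x ^ n := by
  induction n with
  | zero => simpa using isEquivalent_summatory_shiftedZeta_zero
  | succ n ih =>
    rw [Finset.prod_range_succ, mul_comm]
    convert isEquivalent_summatory_shiftedZeta_mul (n + 1) n (by positivity) ih using 2
    rw [Nat.factorial_succ (n + 1), Nat.factorial_succ n]
    push_cast
    field_simp

end Summatory

/-- For `R = ℤ[X]/(X^n)`, the partial sums `∑_{k ≤ B} a_R(k)` are asymptotically
equivalent to `c · B · (log B)^{n-1}` with `c = 1/(n!(n-1)!)`. -/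
theorem ideal_growth_int_poly_quot_pow (n : ℕ) (hn : 0 < n)
    (c : ℝ) (hc : c = 1 / (Nat.factorial n * Nat.factorial (n - 1))) :
    Asymptotics.IsEquivalent Filter.atTop
      (fun B : ℕ =>
        ((∑ k ∈ Finset.Icc 1 B,
          idealCount (Polynomial ℤ ⧸ Ideal.span {(Polynomial.X : Polynomial ℤ) ^ n}) k : ℕ) : ℝ))
      (fun B : ℕ => c * B * Real.log B ^ (n - 1)) := by
  obtain ⟨n, rfl⟩ := Nat.exists_eq_succ_of_ne_zero hn.ne'
  subst hc
  have hsum (B : ℕ) :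
      ∑ k ∈ Finset.Icc 1 B,
          idealCount (Polynomial ℤ ⧸ Ideal.span {(Polynomial.X : Polynomial ℤ) ^ (n + 1)}) k =
        summatory (∏ j ∈ Finset.range (n + 1), shiftedZeta j) B := by
    rw [summatory, Nat.floor_natCast]
    exact Finset.sum_congr rfl fun k hk =>
      idealCount_int_poly_quot_pow _ (Nat.one_le_iff_ne_zero.1 (Finset.mem_Icc.1 hk).1)
  simp only [hsum]
  exact (isEquivalent_summatory_prod_shiftedZeta n).comp_tendsto tendsto_natCast_atTop_atTop
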